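/- Let u : ℝ² → ℝ be a smooth, nowhere-vanishing function of (x,t) satisfying the mKdV equation u_t + u_xxx − 6u²u_x = 0. Let z : ℝ² → ℝ be smooth with z_x(x,t) = u(x,t) and z_t(x,t) = 2u(x,t)³ − u_xx(x,t) for all (x,t), and let U : ℝ² → ℝ be a smooth function of (z,τ) such that U(z(x,t), t) = u(x,t) for all (x,t). Then the RmKdV equation U_τ + (U³(U_zz − U))_z = 0 holds at every point of the form (z(x,t), t). -/

import Mathlib

noncomputable section

/-- Partial derivative of `f` with respect to its first argument. -/
def d1 (f : ℝ → ℝ → ℝ) : ℝ → ℝ → ℝ := fun a b => deriv (fun a' => f a' b) a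

/-- Partial derivative of `f` with respect to its second argument. -/
def d2 (f : ℝ → ℝ → ℝ) : ℝ → ℝ → ℝ := fun a b => deriv (fun b' => f a b') b

/-- Smoothness of a two-variable real function. -/
def Smooth2 (f : ℝ → ℝ → ℝ) : Prop := ContDiff ℝ (⊤ : ℕ∞) (fun p : ℝ × ℝ => f p.1 p.2)

theorem Smooth2.diffAt {f : ℝ → ℝ → ℝ} (hf : Smooth2 f) (p : ℝ × ℝ) :
    DifferentiableAt ℝ (fun p : ℝ × ℝ => f p.1 p.2) p :=
  (ContDiff.differentiable hf (by simp)) p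

theorem Smooth2.d1_eq {f : ℝ → ℝ → ℝ} (hf : Smooth2 f) (a b : ℝ) :
    d1 f a b = fderiv ℝ (fun p : ℝ × ℝ => f p.1 p.2) (a, b) (1, 0) := by
  have h := (hf.diffAt (a, b)).hasFDerivAt.comp_hasDerivAt a
    ((hasDerivAt_id a).prodMk (hasDerivAt_const a b))
  exact h.deriv

theorem Smooth2.d2_eq {f : ℝ → ℝ → ℝ} (hf : Smooth2 f) (a b : ℝ) :
    d2 f a b = fderiv ℝ (fun p : ℝ × ℝ => f p.1 p.2) (a, b) (0, 1) := by
  have h := (hf.diffAt (a, b)).hasFDerivAt.comp_hasDerivAt b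
    ((hasDerivAt_const b a).prodMk (hasDerivAt_id b))
  exact h.deriv

theorem Smooth2.d1 {f : ℝ → ℝ → ℝ} (hf : Smooth2 f) : Smooth2 (d1 f) := by
  have h : ContDiff ℝ (⊤ : ℕ∞) (fderiv ℝ (fun p : ℝ × ℝ => f p.1 p.2)) :=
    ContDiff.fderiv_right (n := (⊤ : ℕ∞)) hf (by norm_cast)
  have h2 := h.clm_apply (contDiff_const (c := ((1 : ℝ), (0 : ℝ))))
  unfold Smooth2
  convert h2 using 2 with p
  exact hf.d1_eq p.1 p.2

theorem Smooth2.hasDeriv1 {f : ℝ → ℝ → ℝ} (hf : Smooth2 f) (a b : ℝ) :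
    HasDerivAt (fun a' => f a' b) (_root_.d1 f a b) a := by
  have h := (hf.diffAt (a, b)).hasFDerivAt.comp_hasDerivAt a
    ((hasDerivAt_id a).prodMk (hasDerivAt_const a b))
  exact h.differentiableAt.hasDerivAt

theorem Smooth2.hasDeriv2 {f : ℝ → ℝ → ℝ} (hf : Smooth2 f) (a b : ℝ) :
    HasDerivAt (fun b' => f a b') (d2 f a b) b := by
  have h := (hf.diffAt (a, b)).hasFDerivAt.comp_hasDerivAt b
    ((hasDerivAt_const b a).prodMk (hasDerivAt_id b))
  exact h.differentiableAt.hasDerivAt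

theorem Smooth2.chain2 {f z : ℝ → ℝ → ℝ} (hf : Smooth2 f) (hz : Smooth2 z) (x t : ℝ) :
    HasDerivAt (fun t' => f (z x t') t')
      (_root_.d1 f (z x t) t * d2 z x t + d2 f (z x t) t) t := by
  have h := HasFDerivAt.comp_hasDerivAt (f := fun t' => (z x t', t')) t
    (hf.diffAt (z x t, t)).hasFDerivAt
    ((hz.hasDeriv2 x t).prodMk (hasDerivAt_id t))
  refine h.congr_deriv ?_
  rw [hf.d1_eq, hf.d2_eq]
  have e : (d2 z x t, (1 : ℝ)) = d2 z x t • ((1 : ℝ), (0 : ℝ)) + ((0 : ℝ), (1 : ℝ)) := by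
    simp
  rw [e, map_add, map_smul, smul_eq_mul, mul_comm]

/-- the reciprocal transformation `dz = u·dx + (2u³ − u_xx)dt`, `τ = t`
turns a nowhere-vanishing solution `u` of mKdV into a solution `U` of RmKdV. -/
theorem reciprocal_mKdV_to_RmKdV (u z U : ℝ → ℝ → ℝ)
    (hu : Smooth2 u) (hz : Smooth2 z) (hU : Smooth2 U)
    (hne : ∀ x t, u x t ≠ 0)
    (hmKdV : ∀ x t, d2 u x t + d1 (d1 (d1 u)) x t - 6 * (u x t) ^ 2 * d1 u x t = 0)
    (hzx : ∀ x t, d1 z x t = u x t)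
    (hzt : ∀ x t, d2 z x t = 2 * (u x t) ^ 3 - d1 (d1 u) x t)
    (hUu : ∀ x t, U (z x t) t = u x t) :
    ∀ x t,
      d2 U (z x t) t
        + d1 (fun a b => (U a b) ^ 3 * (d1 (d1 U) a b - U a b)) (z x t) t = 0 := by
  have hU1 := hU.d1
  have hU11 := hU1.d1
  have hx : ∀ {f : ℝ → ℝ → ℝ}, Smooth2 f → ∀ x t,
      HasDerivAt (fun x' => f (z x' t) t) (d1 f (z x t) t * U (z x t) t) x := by
    intro f hf x t
    have hzd := hz.hasDeriv1 x t
    rw [hzx, ← hUu] at hzd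
    exact (hf.hasDeriv1 (z x t) t).comp x hzd
  have e0 : u = fun x t => U (z x t) t := by
    funext x t; exact (hUu x t).symm
  have e1 : d1 u = fun x t => d1 U (z x t) t * U (z x t) t := by
    funext x t
    rw [e0]
    exact (hx hU x t).deriv
  have e2 : d1 (d1 u) = fun x t => d1 (d1 U) (z x t) t * U (z x t) t * U (z x t) t
      + d1 U (z x t) t * (d1 U (z x t) t * U (z x t) t) := by
    funext x t
    rw [e1]
    exact ((hx hU1 x t).mul (hx hU x t)).deriv
  intro x t
  have e3 := (((((hx hU11 x t).mul (hx hU x t)).mul (hx hU x t)).add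
      ((hx hU1 x t).mul ((hx hU1 x t).mul (hx hU x t))))).deriv
  have e3' : d1 (d1 (d1 u)) x t = _ := (congrFun (congrFun (congrArg d1 e2) x) t).trans e3
  have et : d2 u x t = _ :=
    (congrFun (congrFun (congrArg d2 e0) x) t).trans (hU.chain2 hz x t).deriv
  have eg := (((hU.hasDeriv1 (z x t) t).pow 3).mul
    ((hU11.hasDeriv1 (z x t) t).sub (hU.hasDeriv1 (z x t) t))).deriv
  have eg' : d1 (fun a b => (U a b) ^ 3 * (d1 (d1 U) a b - U a b)) (z x t) t = _ := eg
  have h := hmKdV x t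
  rw [e3', et, hzt, e2, e1, ← hUu] at h
  rw [eg']
  simp only [Pi.mul_apply, Pi.pow_apply, Pi.sub_apply, Pi.add_apply] at h ⊢
  push_cast
  linear_combination h
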